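/- For a (k, L, n)-threshold ramp quantum secret sharing scheme with shares H_1,…,H_n encoding states on H, and for every probability measure μ supported on pure states of H with barycenter σ_μ: (1/L)·H(σ_μ) ≤ (1/n)·∑_{i=1}^n H(W_i(σ_μ)). In particular, (1/L)·log dim H ≤ (1/n)·∑_{i=1}^n log dim H_i. -/

import Mathlib

open Matrix
open scoped ComplexOrder

noncomputable section

/-- A density operator: positive semidefinite with unit trace. -/
def IsDensity {n : Type*} [Fintype n] (ρ : Matrix n n ℂ) : Prop :=
  ρ.PosSemidef ∧ ρ.trace = 1

/-- A pure state: a density operator that is a (rank-one) projection. -/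
def IsPure {n : Type*} [Fintype n] (ρ : Matrix n n ℂ) : Prop :=
  IsDensity ρ ∧ ρ * ρ = ρ

/-- A quantum channel (CPTP map), characterized by a Kraus representation. -/
def IsCPTP {n m : Type*} [Fintype n] [DecidableEq n] [Fintype m]
    (E : Matrix n n ℂ →ₗ[ℂ] Matrix m m ℂ) : Prop :=
  ∃ (N : ℕ) (K : Fin N → Matrix m n ℂ),
    (∀ ρ, E ρ = ∑ a, K a * ρ * (K a)ᴴ) ∧ ∑ a, (K a)ᴴ * K a = 1

/-- The von Neumann entropy `H(ρ) = -Tr[ρ log ρ]`, via the eigenvalues. -/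
def vnEntropy {n : Type*} [Fintype n] [DecidableEq n] (ρ : Matrix n n ℂ) : ℝ :=
  if h : ρ.IsHermitian then ∑ i, Real.negMulLog (h.eigenvalues i) else 0

/-- The matrix (spectral) logarithm of a Hermitian matrix. -/
def matLog {n : Type*} [Fintype n] [DecidableEq n] (ρ : Matrix n n ℂ) : Matrix n n ℂ :=
  if h : ρ.IsHermitian then
    (h.eigenvectorUnitary : Matrix n n ℂ) *
      diagonal (fun i => (Real.log (h.eigenvalues i) : ℂ)) *
      star (h.eigenvectorUnitary : Matrix n n ℂ)
  else 0

/-- The quantum relative entropy `D(ρ‖σ) = Tr[ρ (log ρ - log σ)]`. -/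
def relEntropy {n : Type*} [Fintype n] [DecidableEq n] (ρ σ : Matrix n n ℂ) : ℝ :=
  ((ρ * (matLog ρ - matLog σ)).trace).re
variable {nn : ℕ} {d : Fin nn → Type} [∀ i, Fintype (d i)] [∀ i, DecidableEq (d i)]
variable {H : Type} [Fintype H] [DecidableEq H]

/-- Combine an assignment on a subset `X` of shares with one on its complement. -/
def mergeFun (X : Finset (Fin nn)) (f : (i : {i // i ∈ X}) → d i)
    (z : (i : {i // i ∉ X}) → d i) : (i : Fin nn) → d i :=
  fun i => if h : i ∈ X then f ⟨i, h⟩ else z ⟨i, h⟩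

/-- Partial trace onto the subsystem given by the subset `X` of shares
(tracing out the shares in the complement of `X`). -/
def ptraceSubset (X : Finset (Fin nn))
    (M : Matrix ((i : Fin nn) → d i) ((i : Fin nn) → d i) ℂ) :
    Matrix ((i : {i // i ∈ X}) → d i) ((i : {i // i ∈ X}) → d i) ℂ :=
  fun f g => ∑ z : (i : {i // i ∉ X}) → d i, M (mergeFun X f z) (mergeFun X g z)

/-- A subset `X` of shares is qualified: the reduced channel `W_X` is reversible on all
density operators, i.e. the original state can be perfectly recovered from `X`. -/
def Qualified (W : Matrix H H ℂ →ₗ[ℂ] Matrix ((i : Fin nn) → d i) ((i : Fin nn) → d i) ℂ)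
    (X : Finset (Fin nn)) : Prop :=
  ∃ R : Matrix ((i : {i // i ∈ X}) → d i) ((i : {i // i ∈ X}) → d i) ℂ →ₗ[ℂ] Matrix H H ℂ,
    IsCPTP R ∧ ∀ ρ : Matrix H H ℂ, IsDensity ρ → R (ptraceSubset X (W ρ)) = ρ

/-- A subset `X` of shares is forbidden: the reduced channel `W_X` is vanishing
(constant) on all density operators, i.e. `X` has no information on the state. -/
def Forbidden (W : Matrix H H ℂ →ₗ[ℂ] Matrix ((i : Fin nn) → d i) ((i : Fin nn) → d i) ℂ)
    (X : Finset (Fin nn)) : Prop :=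
  ∃ ρ₀, IsDensity ρ₀ ∧ ∀ ρ : Matrix H H ℂ, IsDensity ρ → ptraceSubset X (W ρ) = ρ₀

/-- A `(k, L, n)`-threshold ramp quantum secret sharing scheme: a channel from states
on `H` into the `n`-share system such that a subset `X` is qualified iff `|X| ≥ k` and
forbidden iff `|X| ≤ k - L`. -/
def IsRampQSS (k L : ℕ)
    (W : Matrix H H ℂ →ₗ[ℂ] Matrix ((i : Fin nn) → d i) ((i : Fin nn) → d i) ℂ) : Prop :=
  IsCPTP W ∧
    (∀ X : Finset (Fin nn), Qualified W X ↔ k ≤ X.card) ∧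
    (∀ X : Finset (Fin nn), Forbidden W X ↔ X.card ≤ k - L)


theorem vnE_eq {n : Type*} [Fintype n] [DecidableEq n] {ρ : Matrix n n ℂ} (h : ρ.IsHermitian) :
    vnEntropy ρ = (ρ.charpoly.roots.map (fun z : ℂ => Real.negMulLog z.re)).sum := by
  rw [vnEntropy, dif_pos h, h.roots_charpoly_eq_eigenvalues]
  simp

theorem vnE_congr {n m : Type*} [Fintype n] [DecidableEq n] [Fintype m] [DecidableEq m]
    {ρ : Matrix n n ℂ} {τ : Matrix m m ℂ} (h : ρ.IsHermitian) (h' : τ.IsHermitian)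
    (hc : ρ.charpoly = τ.charpoly) : vnEntropy ρ = vnEntropy τ := by
  rw [vnE_eq h, vnE_eq h', hc]

theorem vnE_transpose {n : Type*} [Fintype n] [DecidableEq n] {ρ : Matrix n n ℂ}
    (h : ρ.IsHermitian) : vnEntropy ρᵀ = vnEntropy ρ :=
  vnE_congr h.transpose h (Matrix.charpoly_transpose ρ)

theorem vnE_submatrix {n m : Type*} [Fintype n] [DecidableEq n] [Fintype m] [DecidableEq m]
    {ρ : Matrix n n ℂ} (h : ρ.IsHermitian) (e : m ≃ n) :
    vnEntropy (ρ.submatrix e e) = vnEntropy ρ := by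
  refine vnE_congr (h.submatrix e) h ?_
  have := Matrix.charpoly_reindex e.symm ρ
  simpa [Matrix.reindex_apply] using this

theorem vnE_conj {n : Type*} [Fintype n] [DecidableEq n] {ρ : Matrix n n ℂ}
    (h : ρ.IsHermitian) (U : Matrix n n ℂ) (hU : U * Uᴴ = 1) :
    vnEntropy (Uᴴ * ρ * U) = vnEntropy ρ := by
  refine vnE_congr (isHermitian_conjTranspose_mul_mul U h) h ?_
  rw [Matrix.charpoly_mul_comm, ← Matrix.mul_assoc, hU, Matrix.one_mul]

theorem vnE_diagonal {n : Type*} [Fintype n] [DecidableEq n] (v : n → ℝ) :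
    vnEntropy (diagonal (fun i => (v i : ℂ))) = ∑ i, Real.negMulLog (v i) := by
  rw [vnE_eq]
  · have e : (∏ i, (Polynomial.X - Polynomial.C (v i : ℂ))) =
        ((Finset.univ.val.map (fun i => (v i : ℂ))).map
          (fun a => Polynomial.X - Polynomial.C a)).prod := by
      rw [Multiset.map_map]; rfl
    rw [Matrix.charpoly_diagonal, e, Polynomial.roots_multiset_prod_X_sub_C]
    simp
  · rw [Matrix.IsHermitian, Matrix.diagonal_conjTranspose]
    congr 1
    ext i; simp

theorem vnE_mul_comm {n m : Type*} [Fintype n] [DecidableEq n] [Fintype m] [DecidableEq m]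
    (M : Matrix n m ℂ) : vnEntropy (M * Mᴴ) = vnEntropy (Mᴴ * M) := by
  rw [vnE_eq (isHermitian_mul_conjTranspose_self M), vnE_eq (isHermitian_conjTranspose_mul_self M)]
  have h := Matrix.charpoly_mul_comm' M Mᴴ
  have h1 : (Polynomial.X ^ Fintype.card m * (M * Mᴴ).charpoly) ≠ 0 :=
    ((Polynomial.monic_X_pow _).mul (Matrix.charpoly_monic _)).ne_zero
  have h2 : (Polynomial.X ^ Fintype.card n * (Mᴴ * M).charpoly) ≠ 0 :=
    ((Polynomial.monic_X_pow _).mul (Matrix.charpoly_monic _)).ne_zero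
  have h3 := congrArg (fun p => (p.roots.map (fun z : ℂ => Real.negMulLog z.re)).sum) h
  simpa [Polynomial.roots_mul h1, Polynomial.roots_mul h2, Multiset.map_nsmul,
    Multiset.sum_nsmul] using h3

/-- complementary marginals of a pure state have the same entropy -/
theorem vnE_pure {n m : Type*} [Fintype n] [DecidableEq n] [Fintype m] [DecidableEq m]
    (M : Matrix n m ℂ) : vnEntropy (M * Mᴴ) = vnEntropy (Mᵀ * Mᵀᴴ) := by
  rw [vnE_mul_comm, ← vnE_transpose (isHermitian_conjTranspose_mul_self M)]
  congr 1
  rw [Matrix.transpose_mul]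
  rfl

theorem exists_diag {n : Type*} [Fintype n] [DecidableEq n] {ρ : Matrix n n ℂ}
    (h : ρ.IsHermitian) : ∃ (U : Matrix n n ℂ), U * Uᴴ = 1 ∧ Uᴴ * U = 1 ∧
      Uᴴ * ρ * U = diagonal (fun i => (h.eigenvalues i : ℂ)) := by
  refine ⟨h.eigenvectorUnitary, ?_, ?_, ?_⟩
  · exact Unitary.coe_mul_star_self _
  · exact Unitary.coe_star_mul_self _
  · have := h.conjStarAlgAut_star_eigenvectorUnitary
    rw [Unitary.conjStarAlgAut_star_apply] at this
    exact this

/-- diagonal has larger entropy -/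
theorem vnE_le_diag {n : Type*} [Fintype n] [DecidableEq n] {ρ : Matrix n n ℂ}
    (h : ρ.PosSemidef) : vnEntropy ρ ≤ ∑ i, Real.negMulLog (ρ i i).re := by
  obtain ⟨U, h1, h2, h3⟩ := exists_diag h.1
  have hρ : ρ = U * diagonal (fun i => (h.1.eigenvalues i : ℂ)) * Uᴴ := by
    rw [← h3]
    calc ρ = (U * Uᴴ) * ρ * (U * Uᴴ) := by rw [h1]; simp
      _ = _ := by simp only [Matrix.mul_assoc]
  have hd : ∀ i, (ρ i i).re = ∑ k, Complex.normSq (U i k) * h.1.eigenvalues k := by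
    intro i
    conv_lhs => rw [hρ]
    rw [Matrix.mul_apply, Complex.re_sum]
    refine Finset.sum_congr rfl fun k _ => ?_
    rw [Matrix.mul_diagonal, Matrix.conjTranspose_apply]
    simp [Complex.normSq_apply]
    ring
  have hrow : ∀ i, ∑ k, Complex.normSq (U i k) = 1 := by
    intro i
    have := congrFun (congrFun h1 i) i
    rw [Matrix.mul_apply] at this
    have := congrArg Complex.re this
    rw [Complex.re_sum] at this
    simpa [Complex.normSq_apply] using this
  have hcol : ∀ k, ∑ i, Complex.normSq (U i k) = 1 := by
    intro i
    have := congrFun (congrFun h2 i) i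
    rw [Matrix.mul_apply] at this
    have := congrArg Complex.re this
    rw [Complex.re_sum] at this
    simpa [Complex.normSq_apply] using this
  rw [vnEntropy, dif_pos h.1]
  calc ∑ k, Real.negMulLog (h.1.eigenvalues k)
      = ∑ k, ∑ i, Complex.normSq (U i k) * Real.negMulLog (h.1.eigenvalues k) := by
        simp_rw [← Finset.sum_mul, hcol, one_mul]
    _ = ∑ i, ∑ k, Complex.normSq (U i k) * Real.negMulLog (h.1.eigenvalues k) := Finset.sum_comm
    _ ≤ _ := by
        refine Finset.sum_le_sum fun i _ => ?_
        rw [hd]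
        exact Real.concaveOn_negMulLog.le_map_sum (fun k _ => Complex.normSq_nonneg _) (hrow i)
          (fun k _ => h.eigenvalues_nonneg k)

theorem sum_eig {n : Type*} [Fintype n] [DecidableEq n] {ρ : Matrix n n ℂ} (h : IsDensity ρ) :
    ∑ i, h.1.1.eigenvalues i = 1 := by
  have := h.1.1.trace_eq_sum_eigenvalues
  have := congrArg Complex.re (h.2.symm.trans this)
  simpa using this.symm

theorem vnE_le_log {n : Type*} [Fintype n] [DecidableEq n] {ρ : Matrix n n ℂ}
    (h : IsDensity ρ) : vnEntropy ρ ≤ Real.log (Fintype.card n) := by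
  have hs := sum_eig h
  have hne : Nonempty n := by
    by_contra hne
    rw [not_nonempty_iff] at hne
    simp at hs
  have hc : (0:ℝ) < Fintype.card n := by exact_mod_cast Fintype.card_pos
  rw [vnEntropy, dif_pos h.1.1]
  have := Real.concaveOn_negMulLog.le_map_sum (t := Finset.univ)
    (w := fun _ : n => (1 / Fintype.card n : ℝ)) (p := h.1.1.eigenvalues)
    (fun k _ => by positivity) (by simp) (fun k _ => h.1.eigenvalues_nonneg k)
  simp only [smul_eq_mul, ← Finset.mul_sum, hs] at this
  rw [Real.negMulLog] at this
  simp at this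
  rwa [mul_le_mul_iff_of_pos_left (by positivity)] at this

/-- classical subadditivity -/
theorem shannon_subadd {α β : Type*} [Fintype α] [Fintype β] (p : α → β → ℝ)
    (hp : ∀ a b, 0 ≤ p a b) (hs : ∑ a, ∑ b, p a b = 1) :
    ∑ a, ∑ b, Real.negMulLog (p a b) ≤
      ∑ a, Real.negMulLog (∑ b, p a b) + ∑ b, Real.negMulLog (∑ a, p a b) := by
  have key : ∀ a b, Real.negMulLog (p a b) ≤
      p a b * (-Real.log (∑ b, p a b)) + p a b * (-Real.log (∑ a, p a b))
        + ((∑ b, p a b) * (∑ a, p a b) - p a b) := by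
    intro a b
    have ha : p a b ≤ ∑ b, p a b := Finset.single_le_sum (fun b _ => hp a b) (Finset.mem_univ b)
    have hb : p a b ≤ ∑ a, p a b :=
      Finset.single_le_sum (f := fun a => p a b) (fun a _ => hp a b) (Finset.mem_univ a)
    rcases (hp a b).eq_or_lt with h0 | h0
    · rw [← h0]
      have := mul_nonneg (h0.le.trans ha) (h0.le.trans hb)
      simpa using this
    · generalize (∑ b, p a b) = x at *
      generalize (∑ a, p a b) = y at *
      generalize p a b = q at *
      have hx : 0 < x := by linarith
      have hy : 0 < y := by linarith
      have := Real.log_le_sub_one_of_pos (x := x * y / q) (by positivity)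
      rw [Real.log_div (by positivity) h0.ne', Real.log_mul hx.ne' hy.ne'] at this
      have := mul_le_mul_of_nonneg_left this h0.le
      have e : q * (x * y / q - 1) = x * y - q := by field_simp
      rw [e] at this
      rw [Real.negMulLog]
      nlinarith
  have h1 := Finset.sum_le_sum fun a (_ : a ∈ Finset.univ) =>
    Finset.sum_le_sum fun b (_ : b ∈ Finset.univ) => key a b
  refine h1.trans (le_of_eq ?_)
  simp only [Finset.sum_add_distrib, Finset.sum_sub_distrib, hs]
  have e3 : ∑ a, ∑ b, (∑ b, p a b) * (∑ a, p a b) = 1 := by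
    rw [← Finset.sum_mul_sum, hs, Finset.sum_comm, hs, one_mul]
  rw [e3]
  have e1 : ∑ a, ∑ b, p a b * (-Real.log (∑ b, p a b)) = ∑ a, Real.negMulLog (∑ b, p a b) := by
    refine Finset.sum_congr rfl fun a _ => ?_
    rw [← Finset.sum_mul, Real.negMulLog]; ring
  have e2 : ∑ a, ∑ b, p a b * (-Real.log (∑ a, p a b)) = ∑ b, Real.negMulLog (∑ a, p a b) := by
    rw [Finset.sum_comm]
    refine Finset.sum_congr rfl fun a _ => ?_
    rw [← Finset.sum_mul, Real.negMulLog]; ring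
  rw [e1, e2]; ring

/-- trace out second factor -/
def trR {α β : Type*} [Fintype β] (ρ : Matrix (α × β) (α × β) ℂ) : Matrix α α ℂ :=
  fun a a' => ∑ b, ρ (a, b) (a', b)

/-- trace out first factor -/
def trL {α β : Type*} [Fintype α] (ρ : Matrix (α × β) (α × β) ℂ) : Matrix β β ℂ :=
  fun b b' => ∑ a, ρ (a, b) (a, b')

open scoped Kronecker

theorem trR_conj {α β : Type*} [Fintype α] [Fintype β] [DecidableEq α] [DecidableEq β]
    (ρ : Matrix (α × β) (α × β) ℂ)
    (U : Matrix α α ℂ) (V : Matrix β β ℂ) (hV : V * Vᴴ = 1) :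
    trR ((U ⊗ₖ V)ᴴ * ρ * (U ⊗ₖ V)) = Uᴴ * trR ρ * U := by
  have hV' : ∀ x y, ∑ b, V x b * star (V y b) = if x = y then 1 else 0 := by
    intro x y
    have := congrFun (congrFun hV x) y
    rw [Matrix.mul_apply, Matrix.one_apply] at this
    simpa using this
  ext a a'
  simp only [trR, Matrix.mul_apply, Fintype.sum_prod_type, Matrix.conjTranspose_apply,
    Matrix.kroneckerMap_apply, Finset.sum_mul, star_mul', Finset.mul_sum]
  rw [Finset.sum_comm]
  refine Finset.sum_congr rfl fun i _ => ?_
  calc ∑ b, ∑ x, ∑ x_1, ∑ x_2, star (U x_1 a) * star (V x_2 b) * ρ (x_1, x_2) (i, x) * (U i a' * V x b)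
    = ∑ x, ∑ x_1, ∑ x_2, ∑ b, star (U x_1 a) * star (V x_2 b) * ρ (x_1, x_2) (i, x) * (U i a' * V x b) := by
        rw [Finset.sum_comm]
        refine Finset.sum_congr rfl fun x _ => ?_
        rw [Finset.sum_comm]
        refine Finset.sum_congr rfl fun x _ => ?_
        rw [Finset.sum_comm]
    _ = ∑ x, ∑ x_1, ∑ x_2, star (U x_1 a) * ρ (x_1, x_2) (i, x) * U i a' * (if x = x_2 then 1 else 0) := by
        refine Finset.sum_congr rfl fun x _ => Finset.sum_congr rfl fun x1 _ =>
          Finset.sum_congr rfl fun x2 _ => ?_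
        rw [← hV', Finset.mul_sum]
        refine Finset.sum_congr rfl fun b _ => ?_
        ring
    _ = _ := by
        simp
        rw [Finset.sum_comm]

theorem trL_eq {α β : Type*} [Fintype α] (ρ : Matrix (α × β) (α × β) ℂ) :
    trL ρ = trR (ρ.submatrix (Equiv.prodComm β α) (Equiv.prodComm β α)) := rfl

theorem trL_conj {α β : Type*} [Fintype α] [Fintype β] [DecidableEq α] [DecidableEq β]
    (ρ : Matrix (α × β) (α × β) ℂ)
    (U : Matrix α α ℂ) (V : Matrix β β ℂ) (hU : U * Uᴴ = 1) :
    trL ((U ⊗ₖ V)ᴴ * ρ * (U ⊗ₖ V)) = Vᴴ * trL ρ * V := by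
  rw [trL_eq, trL_eq, ← trR_conj _ V U hU]
  congr 1
  rw [← Matrix.submatrix_mul_equiv _ _ _ (Equiv.prodComm β α),
    ← Matrix.submatrix_mul_equiv _ _ _ (Equiv.prodComm β α)]
  congr 1
  · congr 1
    ext ⟨_, _⟩ ⟨_, _⟩
    simp [mul_comm]
  · ext ⟨_, _⟩ ⟨_, _⟩
    simp [mul_comm]

theorem kron_unitary {α β : Type*} [Fintype α] [Fintype β] [DecidableEq α] [DecidableEq β]
    (U : Matrix α α ℂ) (V : Matrix β β ℂ) (hU : U * Uᴴ = 1) (hV : V * Vᴴ = 1) :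
    (U ⊗ₖ V) * (U ⊗ₖ V)ᴴ = 1 := by
  rw [Matrix.conjTranspose_kronecker, ← Matrix.mul_kronecker_mul, hU, hV, Matrix.one_kronecker_one]

theorem herm_trR {α β : Type*} [Fintype β] {ρ : Matrix (α × β) (α × β) ℂ} (h : ρ.IsHermitian) :
    (trR ρ).IsHermitian := by
  ext a a'
  simp only [trR, Matrix.conjTranspose_apply, star_sum]
  exact Finset.sum_congr rfl fun b _ => h.apply _ _

theorem herm_trL {α β : Type*} [Fintype α] {ρ : Matrix (α × β) (α × β) ℂ} (h : ρ.IsHermitian) :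
    (trL ρ).IsHermitian := by
  ext a a'
  simp only [trL, Matrix.conjTranspose_apply, star_sum]
  exact Finset.sum_congr rfl fun b _ => h.apply _ _

theorem vnE_subadd {α β : Type*} [Fintype α] [Fintype β] [DecidableEq α] [DecidableEq β]
    {ρ : Matrix (α × β) (α × β) ℂ} (h : IsDensity ρ) :
    vnEntropy ρ ≤ vnEntropy (trR ρ) + vnEntropy (trL ρ) := by
  obtain ⟨U, hU1, hU2, hU3⟩ := exists_diag (herm_trR h.1.1)
  obtain ⟨V, hV1, hV2, hV3⟩ := exists_diag (herm_trL h.1.1)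
  have hk := kron_unitary U V hU1 hV1
  rw [← vnE_conj h.1.1 _ hk]
  have hR := trR_conj ρ U V hV1
  have hL := trL_conj ρ U V hU1
  have hps : ((U ⊗ₖ V)ᴴ * ρ * (U ⊗ₖ V)).PosSemidef := h.1.conjTranspose_mul_mul_same _
  have htr : ((U ⊗ₖ V)ᴴ * ρ * (U ⊗ₖ V)).trace = 1 := by
    rw [Matrix.trace_mul_comm, ← Matrix.mul_assoc, hk, Matrix.one_mul, h.2]
  rw [hU3] at hR
  rw [hV3] at hL
  generalize (U ⊗ₖ V)ᴴ * ρ * (U ⊗ₖ V) = τ at *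
  refine (vnE_le_diag hps).trans ?_
  rw [Fintype.sum_prod_type]
  have := shannon_subadd (fun a b => (τ (a, b) (a, b)).re)
    (fun a b => (Complex.le_def.1 (hps.diag_nonneg (i := (a, b)))).1)
    (by
      have := congrArg Complex.re htr
      rw [Matrix.trace, Fintype.sum_prod_type] at this
      simpa using this)
  refine this.trans (le_of_eq ?_)
  rw [vnEntropy, vnEntropy, dif_pos (herm_trR h.1.1), dif_pos (herm_trL h.1.1)]
  congr 1
  · refine Finset.sum_congr rfl fun a _ => ?_
    have := congrArg Complex.re (congrFun (congrFun hR a) a)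
    simp [trR] at this
    rw [this]
  · refine Finset.sum_congr rfl fun a _ => ?_
    have := congrArg Complex.re (congrFun (congrFun hL a) a)
    simp [trL] at this
    rw [this]

theorem vnE_kron {α β : Type*} [Fintype α] [Fintype β] [DecidableEq α] [DecidableEq β]
    {s : Matrix α α ℂ} {t : Matrix β β ℂ} (hs : IsDensity s) (ht : IsDensity t) :
    vnEntropy (s ⊗ₖ t) = vnEntropy s + vnEntropy t := by
  obtain ⟨U, hU1, hU2, hU3⟩ := exists_diag hs.1.1
  obtain ⟨V, hV1, hV2, hV3⟩ := exists_diag ht.1.1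
  have hk := kron_unitary U V hU1 hV1
  have hh : (s ⊗ₖ t).IsHermitian := by
    rw [Matrix.IsHermitian, Matrix.conjTranspose_kronecker, hs.1.1, ht.1.1]
  rw [← vnE_conj hh _ hk, Matrix.conjTranspose_kronecker, ← Matrix.mul_kronecker_mul,
    ← Matrix.mul_kronecker_mul, hU3, hV3, Matrix.diagonal_kronecker_diagonal]
  have := vnE_diagonal (fun mn : α × β => hs.1.1.eigenvalues mn.1 * ht.1.1.eigenvalues mn.2)
  push_cast at this
  rw [this, Fintype.sum_prod_type]
  simp only [Real.negMulLog_mul, Finset.sum_add_distrib, ← Finset.mul_sum, ← Finset.sum_mul,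
    sum_eig hs, sum_eig ht]
  rw [vnEntropy, vnEntropy, dif_pos hs.1.1, dif_pos ht.1.1]
  ring

/-- The four-party entropy argument. -/
theorem four_party {R A B E : Type*} [Fintype R] [DecidableEq R] [Fintype A] [DecidableEq A]
    [Fintype B] [DecidableEq B] [Fintype E] [DecidableEq E]
    (Ψ : R → A → B → E → ℂ) (s : Matrix R R ℂ) (β : Matrix B B ℂ) (η : Matrix E E ℂ)
    (hs : IsDensity s) (hβ : IsDensity β) (hη : IsDensity η)
    (hRB : ∀ r r' b b', ∑ a, ∑ e, Ψ r a b e * star (Ψ r' a b' e) = s r r' * β b b')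
    (hRE : ∀ r r' e e', ∑ a, ∑ b, Ψ r a b e * star (Ψ r' a b e') = s r r' * η e e') :
    vnEntropy s ≤ vnEntropy (fun a a' => ∑ r, ∑ b, ∑ e, Ψ r a b e * star (Ψ r a' b e) :
      Matrix A A ℂ) := by
  set ρA : Matrix A A ℂ := fun a a' => ∑ r, ∑ b, ∑ e, Ψ r a b e * star (Ψ r a' b e) with hρA
  let M1 : Matrix (R × B) (A × E) ℂ := fun x y => Ψ x.1 y.1 x.2 y.2
  let M2 : Matrix (R × E) (A × B) ℂ := fun x y => Ψ x.1 y.1 y.2 x.2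
  have hM1 : ∀ x y, M1 x y = Ψ x.1 y.1 x.2 y.2 := fun _ _ => rfl
  have hM2 : ∀ x y, M2 x y = Ψ x.1 y.1 y.2 x.2 := fun _ _ => rfl
  have h1 : M1 * M1ᴴ = s ⊗ₖ β := by
    ext ⟨r, b⟩ ⟨r', b'⟩
    rw [Matrix.mul_apply, Fintype.sum_prod_type]
    exact hRB r r' b b'
  have h2 : M2 * M2ᴴ = s ⊗ₖ η := by
    ext ⟨r, b⟩ ⟨r', b'⟩
    rw [Matrix.mul_apply, Fintype.sum_prod_type]
    exact hRE r r' b b'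
  have hst : ∑ r, s r r = 1 := hs.2
  have d1 : IsDensity (M1ᵀ * M1ᵀᴴ) := by
    refine ⟨posSemidef_self_mul_conjTranspose _, ?_⟩
    have : (M1 * M1ᴴ).trace = 1 := by
      rw [h1, Matrix.trace_kronecker, hs.2, hβ.2, one_mul]
    rw [← this, ← Matrix.trace_transpose (M1 * M1ᴴ), Matrix.transpose_mul,
      Matrix.trace_mul_comm (M1ᴴᵀ)]
    rfl
  have d2 : IsDensity (M2ᵀ * M2ᵀᴴ) := by
    refine ⟨posSemidef_self_mul_conjTranspose _, ?_⟩
    have : (M2 * M2ᴴ).trace = 1 := by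
      rw [h2, Matrix.trace_kronecker, hs.2, hη.2, one_mul]
    rw [← this, ← Matrix.trace_transpose (M2 * M2ᴴ), Matrix.transpose_mul,
      Matrix.trace_mul_comm (M2ᴴᵀ)]
    rfl
  have r1 : trR (M1ᵀ * M1ᵀᴴ) = ρA := by
    ext a a'
    simp only [trR, Matrix.mul_apply, Fintype.sum_prod_type, Matrix.transpose_apply,
      Matrix.conjTranspose_apply, hM1, hρA]
    rw [Finset.sum_comm]
    refine Finset.sum_congr rfl fun r _ => ?_
    rw [Finset.sum_comm]
  have r2 : trR (M2ᵀ * M2ᵀᴴ) = ρA := by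
    ext a a'
    simp only [trR, Matrix.mul_apply, Fintype.sum_prod_type, Matrix.transpose_apply,
      Matrix.conjTranspose_apply, hM2, hρA]
    rw [Finset.sum_comm]
  have l1 : trL (M1ᵀ * M1ᵀᴴ) = η := by
    ext e e'
    simp only [trL, Matrix.mul_apply, Fintype.sum_prod_type, Matrix.transpose_apply,
      Matrix.conjTranspose_apply, hM1]
    rw [Finset.sum_comm]
    simp only [hRE]
    rw [← Finset.sum_mul, hst, one_mul]
  have l2 : trL (M2ᵀ * M2ᵀᴴ) = β := by
    ext e e'
    simp only [trL, Matrix.mul_apply, Fintype.sum_prod_type, Matrix.transpose_apply,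
      Matrix.conjTranspose_apply, hM2]
    rw [Finset.sum_comm]
    simp only [hRB]
    rw [← Finset.sum_mul, hst, one_mul]
  have s1 := vnE_subadd d1
  have s2 := vnE_subadd d2
  rw [← vnE_pure, h1, vnE_kron hs hβ, r1, l1] at s1
  rw [← vnE_pure, h2, vnE_kron hs hη, r2, l2] at s2
  linarith

/-- A linear map that vanishes on densities vanishes. -/
theorem lin_zero_of_density {n : Type*} [Fintype n] [DecidableEq n] {F : Type*} [AddCommGroup F]
    [Module ℂ F] (f : Matrix n n ℂ →ₗ[ℂ] F) (hf : ∀ ρ, IsDensity ρ → f ρ = 0) : f = 0 := by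
  have h1 : ∀ v : n → ℂ, f (vecMulVec v (star v)) = 0 := by
    intro v
    have hps := Matrix.posSemidef_vecMulVec_self_star v
    by_cases h0 : (vecMulVec v (star v)).trace = 0
    · rw [hps.trace_eq_zero_iff] at h0
      rw [h0, map_zero]
    · have hnn : 0 ≤ (vecMulVec v (star v)).trace := hps.trace_nonneg
      set t := (vecMulVec v (star v)).trace
      have : f (t⁻¹ • vecMulVec v (star v)) = 0 := by
        refine hf _ ⟨hps.smul (inv_nonneg.2 hnn), ?_⟩
        rw [Matrix.trace_smul, smul_eq_mul]
        exact inv_mul_cancel₀ h0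
      rw [map_smul] at this
      exact (smul_eq_zero.1 this).resolve_left (inv_ne_zero h0)
  have h2 : ∀ u v : n → ℂ, f (vecMulVec u (star v)) = 0 := by
    intro u v
    have e : (4 : ℂ) • vecMulVec u (star v) =
        vecMulVec (u + v) (star (u + v)) - vecMulVec (u - v) (star (u - v))
        + Complex.I • vecMulVec (u + Complex.I • v) (star (u + Complex.I • v))
        - Complex.I • vecMulVec (u - Complex.I • v) (star (u - Complex.I • v)) := by
      ext i j
      simp [vecMulVec_apply]
      ring_nf
      simp [Complex.I_sq]
      ring
    have := congrArg f e
    simp only [map_sub, map_add, map_smul, h1] at this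
    simpa using this
  refine LinearMap.ext fun M => ?_
  rw [LinearMap.zero_apply, Matrix.matrix_eq_sum_single M]
  simp only [map_sum]
  refine Finset.sum_eq_zero fun i _ => Finset.sum_eq_zero fun j _ => ?_
  have e : Matrix.single i j (M i j) = M i j • vecMulVec (Pi.single i 1) (star (Pi.single j (1:ℂ))) := by
    ext a b
    simp only [Matrix.single_apply, Matrix.smul_apply, vecMulVec_apply, Pi.star_apply,
      Pi.single_apply, smul_eq_mul]
    by_cases h : i = a <;> by_cases h' : j = b <;> simp [h, h', eq_comm]
  rw [e, map_smul, h2, smul_zero]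

theorem lin_eq_of_density {n : Type*} [Fintype n] [DecidableEq n] {F : Type*} [AddCommGroup F]
    [Module ℂ F] (f g : Matrix n n ℂ →ₗ[ℂ] F) (hf : ∀ ρ, IsDensity ρ → f ρ = g ρ) : f = g := by
  rw [← sub_eq_zero]
  refine lin_zero_of_density _ fun ρ hρ => ?_
  rw [LinearMap.sub_apply, hf ρ hρ, sub_self]

/-- Kraus operators of the identity channel are scalars. -/
theorem kraus_id {n J : Type*} [Fintype n] [DecidableEq n] [Fintype J]
    (F : J → Matrix n n ℂ) (h : ∀ ρ : Matrix n n ℂ, ∑ j, F j * ρ * (F j)ᴴ = ρ) :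
    ∃ c : J → ℂ, ∀ j, F j = c j • (1 : Matrix n n ℂ) := by
  have hk : ∀ a k b l, ∑ j, F j a k * star (F j b l) = if k = a ∧ l = b then 1 else 0 := by
    intro a k b l
    have := congrFun (congrFun (h (Matrix.single k l 1)) a) b
    rw [Matrix.sum_apply, Matrix.single_apply] at this
    rw [← this]
    refine Finset.sum_congr rfl fun j _ => ?_
    rw [Matrix.mul_apply, Finset.sum_eq_single l]
    · rw [Matrix.mul_single_apply_same]; simp
    · intro x _ hx
      rw [Matrix.mul_single_apply_of_ne _ _ _ _ _ hx, zero_mul]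
    · simp
  have hsq : ∀ g : J → ℂ, ∑ j, g j * star (g j) = 0 → ∀ j, g j = 0 := by
    intro g hg j
    have hg' : ∑ j, Complex.normSq (g j) = 0 := by
      have : ∑ j, ((Complex.normSq (g j) : ℝ) : ℂ) = 0 := by
        rw [← hg]
        refine Finset.sum_congr rfl fun j _ => ?_
        exact (Complex.mul_conj _).symm
      exact_mod_cast this
    rw [Finset.sum_eq_zero_iff_of_nonneg (fun j _ => Complex.normSq_nonneg _)] at hg'
    exact Complex.normSq_eq_zero.1 (hg' j (Finset.mem_univ j))
  have hoff : ∀ a k, k ≠ a → ∀ j, F j a k = 0 := by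
    intro a k hak
    refine hsq (fun j => F j a k) ?_
    rw [hk, if_neg]; tauto
  have hdiag : ∀ a b j, F j a a = F j b b := by
    intro a b j
    have := hsq (fun j => F j a a - F j b b) (by
      simp only [star_sub, sub_mul, mul_sub, Finset.sum_sub_distrib, hk]
      simp) j
    exact sub_eq_zero.1 this
  rcases isEmpty_or_nonempty n with hn | ⟨⟨x⟩⟩
  · exact ⟨fun _ => 0, fun j => by ext a; exact hn.elim a⟩
  · refine ⟨fun j => F j x x, fun j => ?_⟩
    ext a b
    by_cases hab : a = b
    · subst hab; simp [hdiag a x j]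
    · simp [hab, hoff a b (Ne.symm hab) j]

/-- Knill-Laflamme condition from recoverability. -/
theorem knill_laflamme {n m E J : Type*} [Fintype n] [DecidableEq n] [Fintype m] [DecidableEq m]
    [Fintype E] [Fintype J]
    (V : E → Matrix m n ℂ) (M : J → Matrix n m ℂ) (hM : ∑ j, (M j)ᴴ * M j = 1)
    (h : ∀ ρ : Matrix n n ℂ, ∑ j, M j * (∑ e, V e * ρ * (V e)ᴴ) * (M j)ᴴ = ρ) :
    ∃ c : J → E → ℂ, ∀ e e', (V e)ᴴ * V e' = (∑ j, star (c j e) * c j e') • (1 : Matrix n n ℂ) := by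
  obtain ⟨c, hc⟩ := kraus_id (J := J × E) (fun x => M x.1 * V x.2) (by
    intro ρ
    rw [Fintype.sum_prod_type]
    refine Eq.trans ?_ (h ρ)
    refine Finset.sum_congr rfl fun j _ => ?_
    rw [Matrix.mul_sum, Matrix.sum_mul]
    refine Finset.sum_congr rfl fun e _ => ?_
    simp only [Matrix.conjTranspose_mul, Matrix.mul_assoc])
  refine ⟨fun j e => c (j, e), fun e e' => ?_⟩
  calc (V e)ᴴ * V e' = (V e)ᴴ * (∑ j, (M j)ᴴ * M j) * V e' := by rw [hM, Matrix.mul_one]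
    _ = ∑ j, (M j * V e)ᴴ * (M j * V e') := by
      rw [Matrix.mul_sum, Matrix.sum_mul]
      refine Finset.sum_congr rfl fun j _ => ?_
      simp only [Matrix.conjTranspose_mul, Matrix.mul_assoc]
    _ = _ := by
      rw [Finset.sum_smul]
      refine Finset.sum_congr rfl fun j _ => ?_
      have h1 := hc (j, e)
      have h2 := hc (j, e')
      simp only at h1 h2
      rw [h1, h2, Matrix.conjTranspose_smul, Matrix.conjTranspose_one, Matrix.smul_mul,
        Matrix.one_mul, smul_smul]

/-- glue assignments on `X`, `Y` and the rest -/
def glue (X Y : Finset (Fin nn)) (f : (i : {i // i ∈ X}) → d i)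
    (y : (i : {i // i ∈ Y}) → d i) (z : (i : {i // i ∉ X ∪ Y}) → d i) : (i : Fin nn) → d i :=
  fun i => if h : i ∈ X then f ⟨i, h⟩ else if h' : i ∈ Y then y ⟨i, h'⟩ else
    z ⟨i, by simp [h, h']⟩

/-- assignments on a disjoint union -/
def equivXY (X Y : Finset (Fin nn)) (hXY : Disjoint X Y) :
    (((i : {i // i ∈ X}) → d i) × ((i : {i // i ∈ Y}) → d i)) ≃
      ((i : {i // i ∈ X ∪ Y}) → d i) where
  toFun p i := if h : i.1 ∈ X then p.1 ⟨i.1, h⟩ else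
    p.2 ⟨i.1, (Finset.mem_union.1 i.2).resolve_left h⟩
  invFun g := (fun i => g ⟨i.1, Finset.mem_union_left _ i.2⟩,
    fun i => g ⟨i.1, Finset.mem_union_right _ i.2⟩)
  left_inv p := by
    refine Prod.ext ?_ ?_
    · funext i; simp
    · funext i
      have : i.1 ∉ X := fun h => Finset.disjoint_left.1 hXY h i.2
      simp [this]
  right_inv g := by
    funext i
    by_cases h : i.1 ∈ X <;> simp [h]

/-- assignments on the complement of `X` -/
def equivCX (X Y : Finset (Fin nn)) (hXY : Disjoint X Y) :
    (((i : {i // i ∈ Y}) → d i) × ((i : {i // i ∉ X ∪ Y}) → d i)) ≃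
      ((i : {i // i ∉ X}) → d i) where
  toFun p i := if h : i.1 ∈ Y then p.1 ⟨i.1, h⟩ else p.2 ⟨i.1, by simp [h, i.2]⟩
  invFun g := (fun i => g ⟨i.1, fun h => Finset.disjoint_left.1 hXY h i.2⟩,
    fun i => g ⟨i.1, fun h => i.2 (Finset.mem_union_left _ h)⟩)
  left_inv p := by
    refine Prod.ext ?_ ?_
    · funext i; simp
    · funext i
      have : i.1 ∉ Y := fun h => i.2 (Finset.mem_union_right _ h)
      simp [this]
  right_inv g := by
    funext i
    by_cases h : i.1 ∈ Y <;> simp [h]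

/-- assignments on the complement of `Y` -/
def equivCY (X Y : Finset (Fin nn)) (hXY : Disjoint X Y) :
    (((i : {i // i ∈ X}) → d i) × ((i : {i // i ∉ X ∪ Y}) → d i)) ≃
      ((i : {i // i ∉ Y}) → d i) where
  toFun p i := if h : i.1 ∈ X then p.1 ⟨i.1, h⟩ else p.2 ⟨i.1, by simp [h, i.2]⟩
  invFun g := (fun i => g ⟨i.1, fun h => Finset.disjoint_left.1 hXY i.2 h⟩,
    fun i => g ⟨i.1, fun h => i.2 (Finset.mem_union_right _ h)⟩)
  left_inv p := by
    refine Prod.ext ?_ ?_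
    · funext i; simp
    · funext i
      have : i.1 ∉ X := fun h => i.2 (Finset.mem_union_left _ h)
      simp [this]
  right_inv g := by
    funext i
    by_cases h : i.1 ∈ X <;> simp [h]

theorem merge_CX (X Y : Finset (Fin nn)) (hXY : Disjoint X Y) (f : (i : {i // i ∈ X}) → d i)
    (y : (i : {i // i ∈ Y}) → d i) (z : (i : {i // i ∉ X ∪ Y}) → d i) :
    mergeFun X f (equivCX X Y hXY (y, z)) = glue X Y f y z := by
  funext i
  by_cases h : i ∈ X <;> by_cases h' : i ∈ Y <;> simp [mergeFun, glue, equivCX, h, h']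

theorem merge_CY (X Y : Finset (Fin nn)) (hXY : Disjoint X Y) (f : (i : {i // i ∈ X}) → d i)
    (y : (i : {i // i ∈ Y}) → d i) (z : (i : {i // i ∉ X ∪ Y}) → d i) :
    mergeFun Y y (equivCY X Y hXY (f, z)) = glue X Y f y z := by
  funext i
  by_cases h : i ∈ X
  · have h' : i ∉ Y := Finset.disjoint_left.1 hXY h
    simp [mergeFun, glue, equivCY, h, h']
  · by_cases h' : i ∈ Y <;> simp [mergeFun, glue, equivCY, h, h']

theorem merge_XY (X Y : Finset (Fin nn)) (hXY : Disjoint X Y) (f : (i : {i // i ∈ X}) → d i)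
    (y : (i : {i // i ∈ Y}) → d i) (z : (i : {i // i ∉ X ∪ Y}) → d i) :
    mergeFun (X ∪ Y) (equivXY X Y hXY (f, y)) z = glue X Y f y z := by
  funext i
  by_cases h : i ∈ X <;> by_cases h' : i ∈ Y <;> simp [mergeFun, glue, equivXY, h, h']

theorem ptrace_X (X Y : Finset (Fin nn)) (hXY : Disjoint X Y)
    (M : Matrix ((i : Fin nn) → d i) ((i : Fin nn) → d i) ℂ) (f f') :
    ptraceSubset X M f f' = ∑ y, ∑ z, M (glue X Y f y z) (glue X Y f' y z) := by
  rw [ptraceSubset, ← (equivCX X Y hXY).sum_comp, Fintype.sum_prod_type]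
  simp only [merge_CX]

theorem ptrace_Y (X Y : Finset (Fin nn)) (hXY : Disjoint X Y)
    (M : Matrix ((i : Fin nn) → d i) ((i : Fin nn) → d i) ℂ) (y y') :
    ptraceSubset Y M y y' = ∑ f, ∑ z, M (glue X Y f y z) (glue X Y f y' z) := by
  rw [ptraceSubset, ← (equivCY X Y hXY).sum_comp, Fintype.sum_prod_type]
  simp only [merge_CY]

theorem ptrace_XY (X Y : Finset (Fin nn)) (hXY : Disjoint X Y)
    (M : Matrix ((i : Fin nn) → d i) ((i : Fin nn) → d i) ℂ) (f f' y y') :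
    ptraceSubset (X ∪ Y) M (equivXY X Y hXY (f, y)) (equivXY X Y hXY (f', y')) =
      ∑ z, M (glue X Y f y z) (glue X Y f' y' z) := by
  rw [ptraceSubset]
  simp only [merge_XY]

theorem ptrace_density (X : Finset (Fin nn))
    {M : Matrix ((i : Fin nn) → d i) ((i : Fin nn) → d i) ℂ} (hM : IsDensity M) :
    IsDensity (ptraceSubset X M) := by
  constructor
  · have : ptraceSubset X M = ∑ z : (i : {i // i ∉ X}) → d i,
        M.submatrix (fun f => mergeFun X f z) (fun f => mergeFun X f z) := by
      ext f g
      rw [Matrix.sum_apply]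
      rfl
    rw [this]
    exact Matrix.posSemidef_sum _ fun z _ => hM.1.submatrix _
  · rw [← hM.2, Matrix.trace, Matrix.trace,
      ← (Equiv.piEquivPiSubtypeProd (fun i => i ∈ X) d).symm.sum_comp, Fintype.sum_prod_type]
    rfl

theorem cptp_density {n m : Type*} [Fintype n] [DecidableEq n] [Fintype m]
    {E : Matrix n n ℂ →ₗ[ℂ] Matrix m m ℂ} (hE : IsCPTP E) {ρ : Matrix n n ℂ} (h : IsDensity ρ) :
    IsDensity (E ρ) := by
  obtain ⟨N, K, hK, hK1⟩ := hE
  rw [hK]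
  refine ⟨Matrix.posSemidef_sum _ fun a _ => h.1.mul_mul_conjTranspose_same _, ?_⟩
  rw [Matrix.trace_sum, ← h.2]
  have : ∀ a, (K a * ρ * (K a)ᴴ).trace = ((K a)ᴴ * K a * ρ).trace := by
    intro a
    rw [Matrix.trace_mul_comm, Matrix.mul_assoc]
  simp only [this]
  rw [← Matrix.trace_sum, ← Matrix.sum_mul, hK1, Matrix.one_mul]

theorem ptrace_subadd (X Y : Finset (Fin nn)) (hXY : Disjoint X Y)
    {M : Matrix ((i : Fin nn) → d i) ((i : Fin nn) → d i) ℂ} (hM : IsDensity M) :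
    vnEntropy (ptraceSubset (X ∪ Y) M) ≤
      vnEntropy (ptraceSubset X M) + vnEntropy (ptraceSubset Y M) := by
  have hd := ptrace_density (X ∪ Y) hM
  rw [← vnE_submatrix hd.1.1 (equivXY X Y hXY)]
  have hd' : IsDensity ((ptraceSubset (X ∪ Y) M).submatrix (equivXY X Y hXY) (equivXY X Y hXY)) :=
    ⟨hd.1.submatrix _, by
      rw [← hd.2, Matrix.trace, Matrix.trace, ← (equivXY X Y hXY).sum_comp]; rfl⟩
  refine (vnE_subadd hd').trans (le_of_eq ?_)
  congr 2
  · ext f f'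
    rw [ptrace_X X Y hXY]
    simp only [trR, Matrix.submatrix_apply, ptrace_XY]
  · ext y y'
    rw [ptrace_Y X Y hXY]
    simp only [trL, Matrix.submatrix_apply, ptrace_XY]

theorem ptrace_le_sum (X : Finset (Fin nn))
    {M : Matrix ((i : Fin nn) → d i) ((i : Fin nn) → d i) ℂ} (hM : IsDensity M) :
    vnEntropy (ptraceSubset X M) ≤ ∑ i ∈ X, vnEntropy (ptraceSubset {i} M) := by
  induction X using Finset.induction_on with
  | empty =>
    refine (vnE_le_log (ptrace_density ∅ hM)).trans ?_
    simp
  | insert a s ha ih =>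
    rw [Finset.sum_insert ha, Finset.insert_eq]
    exact (ptrace_subadd {a} s (by simpa using ha) hM).trans (by linarith)

/-- the partial trace as a linear map -/
def ptraceLin (X : Finset (Fin nn)) :
    Matrix ((i : Fin nn) → d i) ((i : Fin nn) → d i) ℂ →ₗ[ℂ]
      Matrix ((i : {i // i ∈ X}) → d i) ((i : {i // i ∈ X}) → d i) ℂ where
  toFun := ptraceSubset X
  map_add' M N := by
    ext f g
    simp [ptraceSubset, Finset.sum_add_distrib]
  map_smul' c M := by
    ext f g
    simp [ptraceSubset, Finset.mul_sum]

theorem sandwich_single {n m : Type*} [Fintype n] [DecidableEq n] (P : Matrix m n ℂ) (r r' : n)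
    (t t' : m) : (P * Matrix.single r r' (1 : ℂ) * Pᴴ) t t' = P t r * star (P t' r') := by
  rw [Matrix.mul_apply, Finset.sum_eq_single r']
  · rw [Matrix.mul_single_apply_same]; simp
  · intro x _ hx
    rw [Matrix.mul_single_apply_of_ne _ _ _ _ _ hx, zero_mul]
  · simp

/-- significant-set bound -/
theorem signif (W : Matrix H H ℂ →ₗ[ℂ] Matrix ((i : Fin nn) → d i) ((i : Fin nn) → d i) ℂ)
    (hW : IsCPTP W) (X Y : Finset (Fin nn)) (hXY : Disjoint X Y)
    (hY : Forbidden W Y) (hQ : Qualified W (X ∪ Y)) {σ : Matrix H H ℂ} (hσ : IsDensity σ) :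
    vnEntropy σ ≤ vnEntropy (ptraceSubset X (W σ)) := by
  obtain ⟨N, K, hK, -⟩ := hW
  obtain ⟨ρ₀, hρ₀, hF⟩ := hY
  obtain ⟨R, ⟨J, M, hM, hM1⟩, hR⟩ := hQ
  obtain ⟨C, hC⟩ : ∃ C : Matrix H H ℂ, σ = Cᴴ * C := by
    obtain ⟨U, h1, h2, h3⟩ := exists_diag hσ.1.1
    refine ⟨diagonal (fun i => (Real.sqrt (hσ.1.1.eigenvalues i) : ℂ)) * Uᴴ, ?_⟩
    have e : (diagonal (fun i => (hσ.1.1.eigenvalues i : ℂ))) =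
        (diagonal (fun i => (Real.sqrt (hσ.1.1.eigenvalues i) : ℂ)))ᴴ *
        diagonal (fun i => (Real.sqrt (hσ.1.1.eigenvalues i) : ℂ)) := by
      rw [Matrix.diagonal_conjTranspose, Matrix.diagonal_mul_diagonal]
      congr 1
      funext i
      simp only [Pi.star_apply, Complex.star_def, Complex.conj_ofReal]
      rw [← Complex.ofReal_mul, Real.mul_self_sqrt (hσ.1.eigenvalues_nonneg i)]
    calc σ = U * (Uᴴ * σ * U) * Uᴴ := by
          simp only [Matrix.mul_assoc, h1, Matrix.mul_one]
          rw [← Matrix.mul_assoc, h1, Matrix.one_mul]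
      _ = _ := by
          rw [h3, e]
          simp only [Matrix.conjTranspose_mul, Matrix.conjTranspose_conjTranspose, Matrix.mul_assoc]
  obtain ⟨D, hD⟩ : ∃ D : Matrix H H ℂ, σ = D * Dᴴ := ⟨Cᴴ, by rw [hC]; simp⟩
  -- linear extensions of the conditions
  have hF' : ∀ T : Matrix H H ℂ, ptraceSubset Y (W T) = T.trace • ρ₀ := by
    have := lin_eq_of_density ((ptraceLin Y).comp W)
      ((Matrix.traceLinearMap H ℂ ℂ).smulRight ρ₀) (fun ρ hρ => by
        simp only [LinearMap.comp_apply, LinearMap.smulRight_apply, Matrix.traceLinearMap_apply,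
          hρ.2, one_smul]
        exact hF ρ hρ)
    intro T
    exact congrArg (fun f => f T) this
  have hR' : ∀ T : Matrix H H ℂ, R (ptraceSubset (X ∪ Y) (W T)) = T := by
    have := lin_eq_of_density (R.comp ((ptraceLin (X ∪ Y)).comp W)) LinearMap.id
      (fun ρ hρ => hR ρ hρ)
    intro T
    exact congrArg (fun f => f T) this
  -- Kraus operators of the reduced channel
  let V : (((i : {i // i ∉ X ∪ Y}) → d i) × Fin N) → Matrix ((i : {i // i ∈ X ∪ Y}) → d i) H ℂ :=
    fun e => (K e.2).submatrix (fun g => mergeFun (X ∪ Y) g e.1) id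
  obtain ⟨c, hc⟩ := knill_laflamme V M hM1 (by
    intro T
    refine Eq.trans ?_ (hR' T)
    rw [hM]
    have : ∑ e, V e * T * (V e)ᴴ = ptraceSubset (X ∪ Y) (W T) := by
      ext g g'
      rw [Matrix.sum_apply, Fintype.sum_prod_type, hK, ptraceSubset]
      refine Finset.sum_congr rfl fun z _ => ?_
      rw [Matrix.sum_apply]
      rfl
    rw [this])
  let Ψ : H → ((i : {i // i ∈ X}) → d i) → ((i : {i // i ∈ Y}) → d i) →
      (((i : {i // i ∉ X ∪ Y}) → d i) × Fin N) → ℂ :=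
    fun r x y e => (K e.2 * D) (glue X Y x y e.1) r
  have hΨ : ∀ r x y e, Ψ r x y e = (K e.2 * D) (glue X Y x y e.1) r := fun _ _ _ _ => rfl
  let s : Matrix H H ℂ := (Dᴴ * D)ᵀ
  let cm : Matrix (Fin J) (((i : {i // i ∉ X ∪ Y}) → d i) × Fin N) ℂ := Matrix.of c
  let η := cmᵀ * cmᵀᴴ
  have hs : IsDensity s := by
    refine ⟨(posSemidef_conjTranspose_mul_self D).transpose, ?_⟩
    rw [Matrix.trace_transpose, Matrix.trace_mul_comm, ← hD, hσ.2]
  have hRB : ∀ r r' b b', ∑ a, ∑ e, Ψ r a b e * star (Ψ r' a b' e) = s r r' * ρ₀ b b' := by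
    intro r r' b b'
    have h1 := congrFun (congrFun (hF' (D * Matrix.single r r' 1 * Dᴴ)) b) b'
    rw [ptrace_Y X Y hXY, hK] at h1
    have h2 : (D * Matrix.single r r' 1 * Dᴴ).trace = s r r' := by
      rw [Matrix.trace_mul_comm, ← Matrix.mul_assoc]
      rw [Matrix.trace_mul_single]
      simp only [s, mul_one, Matrix.transpose_apply]
      simp
    rw [h2, Matrix.smul_apply, smul_eq_mul] at h1
    rw [← h1]
    refine Finset.sum_congr rfl fun a _ => ?_
    rw [Fintype.sum_prod_type]
    refine Finset.sum_congr rfl fun z _ => ?_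
    rw [Matrix.sum_apply]
    refine Finset.sum_congr rfl fun k _ => ?_
    have h3 : K k * (D * Matrix.single r r' 1 * Dᴴ) * (K k)ᴴ =
        (K k * D) * Matrix.single r r' (1 : ℂ) * (K k * D)ᴴ := by
      simp only [Matrix.conjTranspose_mul, Matrix.mul_assoc]
    rw [h3, sandwich_single]
  have hRE : ∀ r r' e e', ∑ a, ∑ b, Ψ r a b e * star (Ψ r' a b e') = s r r' * η e e' := by
    intro r r' e e'
    have h1 : ((V e' * D)ᴴ * (V e * D)) r' r = s r r' * η e e' := by
      have : (V e' * D)ᴴ * (V e * D) = Dᴴ * ((V e')ᴴ * V e) * D := by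
        simp only [Matrix.conjTranspose_mul, Matrix.mul_assoc]
      rw [this, hc, Matrix.mul_smul, Matrix.mul_one, Matrix.smul_mul, Matrix.smul_apply,
        smul_eq_mul, mul_comm]
      congr 1
      simp only [η, Matrix.mul_apply, Matrix.transpose_apply, Matrix.conjTranspose_apply]
      refine Finset.sum_congr rfl fun j _ => ?_
      rw [mul_comm]
      rfl
    rw [← h1, Matrix.mul_apply, ← (equivXY X Y hXY).sum_comp, Fintype.sum_prod_type]
    refine Finset.sum_congr rfl fun x _ => Finset.sum_congr rfl fun y _ => ?_
    have h2 : ∀ e r, (V e * D) (equivXY X Y hXY (x, y)) r = Ψ r x y e := by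
      intro e r
      rw [hΨ, ← merge_XY X Y hXY]
      rfl
    rw [Matrix.conjTranspose_apply, h2, h2, mul_comm]
  have hst : ∑ r, s r r = 1 := hs.2
  have hη : IsDensity η := by
    refine ⟨posSemidef_self_mul_conjTranspose _, ?_⟩
    have h1 : ∑ r, ∑ e, ∑ a, ∑ b, Ψ r a b e * star (Ψ r a b e) = η.trace := by
      simp only [hRE, ← Finset.mul_sum, ← Finset.sum_mul, hst, one_mul]
      rfl
    have h2 : ∑ r, ∑ b, ∑ a, ∑ e, Ψ r a b e * star (Ψ r a b e) = ρ₀.trace := by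
      simp only [hRB, ← Finset.mul_sum, ← Finset.sum_mul, hst, one_mul]
      rfl
    rw [← h1, ← hρ₀.2, ← h2]
    refine Finset.sum_congr rfl fun r _ => ?_
    rw [Finset.sum_comm]
    conv_rhs => rw [Finset.sum_comm]
    refine Finset.sum_congr rfl fun a _ => ?_
    rw [Finset.sum_comm]
  have key := four_party Ψ s ρ₀ η hs hρ₀ hη hRB hRE
  have e1 : vnEntropy s = vnEntropy σ := by
    rw [hD, vnE_mul_comm]
    exact vnE_transpose (isHermitian_conjTranspose_mul_self D)
  have e2 : (fun a a' => ∑ r, ∑ b, ∑ e, Ψ r a b e * star (Ψ r a' b e) :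
      Matrix ((i : {i // i ∈ X}) → d i) ((i : {i // i ∈ X}) → d i) ℂ) =
      ptraceSubset X (W σ) := by
    ext x x'
    rw [ptrace_X X Y hXY, hK]
    rw [Finset.sum_comm]
    refine Finset.sum_congr rfl fun y _ => ?_
    rw [Finset.sum_comm, Fintype.sum_prod_type]
    refine Finset.sum_congr rfl fun z _ => ?_
    rw [Matrix.sum_apply]
    refine Finset.sum_congr rfl fun k _ => ?_
    have h3 : K k * σ * (K k)ᴴ = (K k * D) * (K k * D)ᴴ := by
      rw [hD]
      simp only [Matrix.conjTranspose_mul, Matrix.mul_assoc]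
    rw [h3, Matrix.mul_apply]
    rfl
  rw [e1, e2] at key
  exact key

theorem averaging {n L : ℕ} (hL : 1 ≤ L) (hn : L ≤ n) (f : Fin n → ℝ) (c : ℝ)
    (h : ∀ X : Finset (Fin n), X.card = L → c ≤ ∑ i ∈ X, f i) :
    (1 / (L : ℝ)) * c ≤ (1 / (n : ℝ)) * ∑ i, f i := by
  obtain ⟨X₀, -, hX₀⟩ := Finset.exists_subset_card_eq (s := (Finset.univ : Finset (Fin n)))
    (n := L) (by simpa using hn)
  have i₀ : Fin n := ⟨0, by omega⟩
  have hG : ∀ i, ∑ π : Equiv.Perm (Fin n), f (π i) = ∑ π : Equiv.Perm (Fin n), f (π i₀) := by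
    intro i
    rw [← Equiv.sum_comp (Equiv.mulRight (Equiv.swap i i₀))]
    simp
  set g := ∑ π : Equiv.Perm (Fin n), f (π i₀) with hg
  set P : ℝ := (Fintype.card (Equiv.Perm (Fin n)) : ℝ) with hP
  have hPpos : 0 < P := by rw [hP]; exact_mod_cast Fintype.card_pos
  have h1 : P * c ≤ L * g := by
    have : ∑ π : Equiv.Perm (Fin n), c ≤ ∑ π : Equiv.Perm (Fin n), ∑ i ∈ X₀, f (π i) := by
      refine Finset.sum_le_sum fun π _ => ?_
      have := h (X₀.map π.toEmbedding) (by simpa using hX₀)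
      simpa using this
    rw [Finset.sum_comm] at this
    simp only [hG] at this
    simpa [hX₀, hP] using this
  have h2 : n * g = P * ∑ i, f i := by
    have : ∑ i, ∑ π : Equiv.Perm (Fin n), f (π i) = P * ∑ i, f i := by
      rw [Finset.sum_comm]
      have : ∀ π : Equiv.Perm (Fin n), ∑ i, f (π i) = ∑ i, f i := fun π => Equiv.sum_comp π f
      simp only [this]
      simp [hP]
    rw [← this]
    simp only [hG]
    simp
  have hLp : (0:ℝ) < L := by exact_mod_cast hL
  have hnp : (0:ℝ) < n := by exact_mod_cast (by omega : 0 < n)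
  rw [one_div_mul_eq_div, one_div_mul_eq_div, div_le_div_iff₀ hLp hnp]
  have h3 : P * (c * n) ≤ P * ((∑ i, f i) * L) := by
    calc P * (c * n) = (P * c) * n := by ring
      _ ≤ (L * g) * n := by gcongr
      _ = L * (n * g) := by ring
      _ = _ := by rw [h2]; ring
  exact le_of_mul_le_mul_left h3 hPpos

theorem part_one {k L : ℕ} (hL : 1 ≤ L) (hLk : L ≤ k) (hkn : k ≤ nn)
    (W : Matrix H H ℂ →ₗ[ℂ] Matrix ((i : Fin nn) → d i) ((i : Fin nn) → d i) ℂ)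
    (hW : IsRampQSS k L W) {σ : Matrix H H ℂ} (hσ : IsDensity σ) :
    (1 / (L : ℝ)) * vnEntropy σ ≤
      (1 / (nn : ℝ)) * ∑ i : Fin nn, vnEntropy (ptraceSubset {i} (W σ)) := by
  obtain ⟨hC, hQ, hF⟩ := hW
  refine averaging hL (hLk.trans hkn) _ _ fun X hX => ?_
  obtain ⟨Y, hYX, hY⟩ := Finset.exists_subset_card_eq (s := Xᶜ) (n := k - L) (by
    rw [Finset.card_compl, hX, Fintype.card_fin]; omega)
  have hXY : Disjoint X Y := by
    rw [Finset.disjoint_left]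
    intro i hi hi'
    exact (Finset.mem_compl.1 (hYX hi')) hi
  refine (signif W hC X Y hXY ((hF Y).2 hY.le) ((hQ _).2 ?_) hσ).trans
    (ptrace_le_sum X (cptp_density hC hσ))
  rw [Finset.card_union_of_disjoint hXY, hX, hY]
  omega

theorem mix_density {ι : Type} [Fintype ι] (p : ι → ℝ) (hp : ∀ i, 0 ≤ p i) (hs : ∑ i, p i = 1)
    (ρs : ι → Matrix H H ℂ) (h : ∀ i, IsPure (ρs i)) : IsDensity (∑ j, p j • ρs j) := by
  refine ⟨Matrix.posSemidef_sum _ fun j _ => (h j).1.1.smul (hp j), ?_⟩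
  rw [Matrix.trace_sum]
  simp only [Matrix.trace_smul, (h _).1.2]
  rw [← Finset.sum_smul, hs, one_smul]

/-- Coding efficiency of `(k, L, n)`-threshold ramp QSS schemes: for every (finitely
supported) probability measure `μ = (p, ρs)` on pure states with barycenter `σ_μ`,
`(1/L) H(σ_μ) ≤ (1/n) ∑ i, H(W_i(σ_μ))`; in particular
`(1/L) log dim H ≤ (1/n) ∑ i, log dim H_i`. -/
theorem stmt_18 {k L : ℕ} (hL : 1 ≤ L) (hLk : L ≤ k) (hkn : k ≤ nn)
    (W : Matrix H H ℂ →ₗ[ℂ] Matrix ((i : Fin nn) → d i) ((i : Fin nn) → d i) ℂ)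
    (hW : IsRampQSS k L W) :
    (∀ (ι : Type) (_ : Fintype ι) (p : ι → ℝ), (∀ i, 0 ≤ p i) → ∑ i, p i = 1 →
      ∀ ρs : ι → Matrix H H ℂ, (∀ i, IsPure (ρs i)) →
        (1 / (L : ℝ)) * vnEntropy (∑ j, p j • ρs j) ≤
          (1 / (nn : ℝ)) * ∑ i : Fin nn, vnEntropy (ptraceSubset {i} (W (∑ j, p j • ρs j)))) ∧
      (1 / (L : ℝ)) * Real.log (Fintype.card H) ≤
        (1 / (nn : ℝ)) * ∑ i : Fin nn, Real.log (Fintype.card (d i)) := by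
  have h1 : ∀ (ι : Type) (_ : Fintype ι) (p : ι → ℝ), (∀ i, 0 ≤ p i) → ∑ i, p i = 1 →
      ∀ ρs : ι → Matrix H H ℂ, (∀ i, IsPure (ρs i)) →
        (1 / (L : ℝ)) * vnEntropy (∑ j, p j • ρs j) ≤
          (1 / (nn : ℝ)) * ∑ i : Fin nn, vnEntropy (ptraceSubset {i} (W (∑ j, p j • ρs j))) :=
    fun ι _ p hp hs ρs h => part_one hL hLk hkn W hW (mix_density p hp hs ρs h)
  refine ⟨h1, ?_⟩
  rcases isEmpty_or_nonempty H with hH | hH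
  · have : (0:ℝ) ≤ ∑ i : Fin nn, Real.log (Fintype.card (d i)) :=
      Finset.sum_nonneg fun i _ => Real.log_natCast_nonneg _
    simp only [Fintype.card_eq_zero, Nat.cast_zero, Real.log_zero, mul_zero]
    positivity
  · have hc : (0:ℝ) < Fintype.card H := by exact_mod_cast Fintype.card_pos
    have hp : ∑ _i : H, (1 / (Fintype.card H : ℝ)) = 1 := by simp
    have hpure : ∀ i : H, IsPure (Matrix.single i i (1:ℂ)) := by
      intro i
      refine ⟨⟨?_, by simp⟩, by simp⟩
      have := posSemidef_self_mul_conjTranspose (Matrix.single i i (1:ℂ))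
      simpa using this
    have hp0 : ∀ _i : H, (0:ℝ) ≤ 1 / (Fintype.card H : ℝ) := fun _ => by positivity
    have h2 := h1 H inferInstance (fun _ => 1 / (Fintype.card H : ℝ)) hp0 hp
      (fun i => Matrix.single i i (1:ℂ)) hpure
    have hd := mix_density (fun _ : H => 1 / (Fintype.card H : ℝ)) hp0 hp
      (fun i => Matrix.single i i (1:ℂ)) hpure
    have e : ∑ j : H, (1 / (Fintype.card H : ℝ)) • Matrix.single j j (1:ℂ) =
        diagonal (fun _ : H => ((1 / (Fintype.card H : ℝ) : ℝ) : ℂ)) := by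
      ext a b
      rw [Matrix.sum_apply]
      by_cases hab : a = b
      · subst hab
        rw [Finset.sum_eq_single a]
        · simp
        · intro x _ hx
          simp [Matrix.single_apply, hx]
        · simp
      · rw [Matrix.diagonal_apply_ne _ hab]
        refine Finset.sum_eq_zero fun x _ => ?_
        rw [Matrix.smul_apply, Matrix.single_apply, if_neg, smul_zero]
        rintro ⟨rfl, rfl⟩
        exact hab rfl
    have e2 : vnEntropy (∑ j : H, (1 / (Fintype.card H : ℝ)) • Matrix.single j j (1:ℂ)) =
        Real.log (Fintype.card H) := by
      rw [e, vnE_diagonal]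
      simp only [Finset.sum_const, Finset.card_univ, nsmul_eq_mul, Real.negMulLog]
      rw [one_div, Real.log_inv]
      field_simp
    rw [e2] at h2
    refine h2.trans ?_
    refine mul_le_mul_of_nonneg_left (Finset.sum_le_sum fun i _ => ?_) (by positivity)
    refine (vnE_le_log (ptrace_density {i} (cptp_density hW.1 hd))).trans (le_of_eq ?_)
    rw [Fintype.card_pi, Finset.prod_coe_sort {i} (fun j => Fintype.card (d j)),
      Finset.prod_singleton]
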